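/- Let L : ℝ^n → ℝ be three times continuously differentiable with bounded derivatives, fix θ₀ ∈ ℝ^n, and for h > 0 and a continuously differentiable vector field f₁ : ℝ^n → ℝ^n with bounded derivative, let θ̃_h solve the ODE θ̇(t) = −∇L(θ(t)) + h f₁(θ(t)) with θ̃_h(0) = θ₀. Then θ̃_h(h) = θ₀ − h ∇L(θ₀) + h² ( f₁(θ₀) + (1/4) ∇(‖∇L‖²)(θ₀) ) + R(h), where the remainder satisfies ‖R(h)‖ ≤ C h³ for some constant C > 0 and all sufficiently small h > 0. -/

import Mathlib

open Set

/-!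
Each integration in `t` over `[0, h]` gains one factor `h`. The velocity is bounded near `θ₀`, so
`θ_h(t) = θ₀ + O(h)`; the equation then makes the velocity constant up to `O(h)`, so
`θ_h(t) = θ₀ - t ∇L(θ₀) + O(h²)`; this in turn gives the velocity up to `O(h²)`, hence
`θ_h(t)` up to `O(h³)`. The term `-∇L` contributes the quadratic coefficient
`½ ∇²L(θ₀) ∇L(θ₀) = ¼ ∇(‖∇L‖²)(θ₀)`, by symmetry of the Hessian. All estimates are local: a curve
whose speed is bounded on a ball around its starting point stays in that ball for a short time.
-/

open Filter Asymptotics Topology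
open scoped Gradient

section NormedSpace

variable {E F : Type*} [NormedAddCommGroup E] [NormedSpace ℝ E]
  [NormedAddCommGroup F] [NormedSpace ℝ F]

/-- The filter on pairs `(h, t)` along which `h → 0⁺` with `0 ≤ t ≤ h`. A big-O bound along it
is an estimate in the step size `h`, uniform in the time `t ∈ [0, h]`. -/
def shortTime : Filter (ℝ × ℝ) :=
  comap Prod.fst (𝓝[>] 0) ⊓ 𝓟 {p | p.2 ∈ Icc 0 p.1}

lemma eventually_shortTime {P : ℝ × ℝ → Prop} :
    (∀ᶠ p in shortTime, P p) ↔ ∀ᶠ h in 𝓝[>] 0, ∀ t ∈ Icc 0 h, P (h, t) := by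
  simp only [shortTime, eventually_inf_principal, eventually_comap, Prod.forall, mem_ofPred_eq]
  refine eventually_congr (.of_forall fun h => ⟨fun H t => H h t rfl, ?_⟩)
  rintro H _ t rfl
  exact H t

lemma tendsto_fst_shortTime : Tendsto Prod.fst shortTime (𝓝[>] 0) :=
  tendsto_comap.mono_left inf_le_left

lemma tendsto_diag_shortTime : Tendsto (fun h => (h, h)) (𝓝[>] 0) shortTime := by
  intro s hs
  rw [mem_map]
  filter_upwards [eventually_shortTime.1 hs, self_mem_nhdsWithin] with h hP hpos
  exact hP h (right_mem_Icc.2 (le_of_lt hpos))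

lemma isBigO_sub_initial_of_deriv {u u' : ℝ → ℝ → E} {k : ℕ}
    (hu : ∀ᶠ h in 𝓝[>] 0, ∀ t ∈ Icc 0 h, HasDerivWithinAt (u h) (u' h t) (Icc 0 h) t)
    (hu' : (fun p => u' p.1 p.2) =O[shortTime] fun p => p.1 ^ k) :
    (fun p => u p.1 p.2 - u p.1 0) =O[shortTime] fun p => p.1 ^ (k + 1) := by
  obtain ⟨C, hC, hbound⟩ := hu'.exists_pos
  refine .of_bound C (eventually_shortTime.2 ?_)
  filter_upwards [hu, eventually_shortTime.1 hbound.bound] with h hderiv hle t ht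
  calc ‖u h t - u h 0‖
      ≤ C * ‖h ^ k‖ * (t - 0) := norm_image_sub_le_of_norm_deriv_le_segment' hderiv
        (fun s hs => hle s (Ico_subset_Icc_self hs)) t ht
    _ ≤ C * ‖h ^ k‖ * ‖h‖ := by
        gcongr
        rw [sub_zero]
        exact ht.2.trans (le_abs_self h)
    _ = C * ‖h ^ (k + 1)‖ := by rw [pow_succ, norm_mul, mul_assoc]

lemma norm_sub_le_mul_of_norm_deriv_lt_on_closedBall {γ γ' : ℝ → E} {M r a b : ℝ}
    (hM : 0 ≤ M) (hr : M * (b - a) ≤ r)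
    (hγ : ∀ t ∈ Icc a b, HasDerivWithinAt γ (γ' t) (Icc a b) t)
    (hγ' : ∀ t ∈ Ico a b, γ t ∈ Metric.closedBall (γ a) r → ‖γ' t‖ < M) :
    ∀ t ∈ Icc a b, ‖γ t - γ a‖ ≤ M * (t - a) := by
  refine image_norm_le_of_norm_deriv_right_lt_deriv_boundary (f := fun t => γ t - γ a) (f' := γ')
    (B := fun t => M * (t - a)) (B' := fun _ => M)
    (fun t ht => (hγ t ht).continuousWithinAt.sub_const _) (fun t ht => ?_) (by simp)
    (fun t => by simpa using ((hasDerivAt_id t).sub_const a).const_mul M) (fun t ht hfence => ?_)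
  · exact ((hγ t (Ico_subset_Icc_self ht)).sub_const _).mono_of_mem_nhdsWithin
      (Icc_mem_nhdsGE_of_mem ht)
  · refine hγ' t ht (mem_closedBall_iff_norm.2 ?_)
    calc ‖γ t - γ a‖
        = M * (t - a) := hfence
      _ ≤ M * (b - a) := by gcongr; exact ht.2.le
      _ ≤ r := hr

lemma isBigO_sub_sub_fderiv_of_contDiffAt {g : E → F} {x : E} (hg : ContDiffAt ℝ 2 g x) :
    (fun y => g y - g x - fderiv ℝ g x (y - x)) =O[𝓝 x] fun y => ‖y - x‖ ^ 2 := by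
  have hfderiv : DifferentiableAt ℝ (fderiv ℝ g) x :=
    (hg.fderiv_right (m := 1) (by norm_num)).differentiableAt one_ne_zero
  have hrem : ∀ᶠ y in 𝓝 x, HasFDerivAt (fun z => g z - g x - fderiv ℝ g x (z - x))
      (fderiv ℝ g y - fderiv ℝ g x) y := by
    filter_upwards [hg.eventually (by simp)] with y hy
    exact ((hy.differentiableAt two_ne_zero).hasFDerivAt.sub_const _).sub
      ((fderiv ℝ g x).hasFDerivAt.comp y ((hasFDerivAt_id y).sub_const x))
  have hrem_fderiv : fderiv ℝ (fun z => g z - g x - fderiv ℝ g x (z - x)) =O[𝓝 x]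
      fun y => ‖y - x‖ ^ (1 : ℝ) := by
    simp only [Real.rpow_one]
    exact hfderiv.isBigO_sub.norm_right.congr' (hrem.mono fun y hy => hy.fderiv.symm) .rfl
  have h := isBigO_norm_rpow_add_one_of_fderiv_of_apply_eq_zero zero_le_one
    (hrem.mono fun y hy => hy.differentiableAt) hrem_fderiv (by simp)
  simpa only [one_add_one_eq_two, Real.rpow_two] using h

/-- `IsPerturbedFlow g f x₀ θ`: for all small `h > 0` the curve `θ h` starts at `x₀` and solves
`θ̇ = g(θ) + h f(θ)` on `[0, h]`. With `g = -∇L` this is the modified equation of gradient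
descent. -/
structure IsPerturbedFlow (g f : E → E) (x₀ : E) (θ : ℝ → ℝ → E) : Prop where
  initial : ∀ᶠ h in 𝓝[>] 0, θ h 0 = x₀
  hasDerivWithinAt : ∀ᶠ h in 𝓝[>] 0, ∀ t ∈ Icc 0 h,
    HasDerivWithinAt (θ h) (g (θ h t) + h • f (θ h t)) (Icc 0 h) t

namespace IsPerturbedFlow

variable {g f : E → E} {x₀ : E} {θ : ℝ → ℝ → E}

lemma isBigO_sub (hθ : IsPerturbedFlow g f x₀ θ) (hg : ContinuousAt g x₀)
    (hf : ContinuousAt f x₀) :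
    (fun p => θ p.1 p.2 - x₀) =O[shortTime] Prod.fst := by
  have hvel : Tendsto (fun p : ℝ × E => ‖g p.2 + p.1 • f p.2‖) (𝓝 0 ×ˢ 𝓝 x₀) (𝓝 ‖g x₀‖) := by
    have hsmul : Tendsto (fun p : ℝ × E => p.1 • f p.2) (𝓝 0 ×ˢ 𝓝 x₀) (𝓝 ((0 : ℝ) • f x₀)) :=
      tendsto_fst.smul (hf.tendsto.comp tendsto_snd)
    simpa using ((hg.tendsto.comp tendsto_snd).add hsmul).norm
  obtain ⟨P, hP, Q, hQ, hPQ⟩ :=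
    eventually_prod_iff.1 (hvel.eventually_lt_const (lt_add_one ‖g x₀‖))
  obtain ⟨r, hr, hrQ⟩ := Metric.nhds_basis_closedBall.eventually_iff.1 hQ
  set M := ‖g x₀‖ + 1
  have hMr : ∀ᶠ h in 𝓝[>] 0, M * h ≤ r := nhdsWithin_le_nhds <| by
    have hlim : Tendsto (fun h => M * h) (𝓝 0) (𝓝 0) := by
      simpa using (tendsto_id (x := 𝓝 (0 : ℝ))).const_mul M
    exact hlim.eventually_le_const hr
  refine .of_bound M (eventually_shortTime.2 ?_)
  filter_upwards [hθ.initial, hθ.hasDerivWithinAt, hMr, nhdsWithin_le_nhds hP]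
    with h hinit hderiv hMh hPh t ht
  calc ‖θ h t - x₀‖
      = ‖θ h t - θ h 0‖ := by rw [hinit]
    _ ≤ M * (t - 0) := norm_sub_le_mul_of_norm_deriv_lt_on_closedBall (by positivity)
        (by rwa [sub_zero]) hderiv (fun s _ hs => hPQ hPh (hrQ (hinit ▸ hs))) t ht
    _ ≤ M * ‖h‖ := by
        gcongr
        rw [sub_zero]
        exact ht.2.trans (le_abs_self h)

lemma tendsto (hθ : IsPerturbedFlow g f x₀ θ) (hg : ContinuousAt g x₀) (hf : ContinuousAt f x₀) :
    Tendsto (fun p => θ p.1 p.2) shortTime (𝓝 x₀) :=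
  tendsto_sub_nhds_zero_iff.1 <| (hθ.isBigO_sub hg hf).trans_tendsto <|
    tendsto_fst_shortTime.mono_right nhdsWithin_le_nhds

lemma isBigO_sub_linear (hθ : IsPerturbedFlow g f x₀ θ) (hg : DifferentiableAt ℝ g x₀)
    (hf : ContinuousAt f x₀) :
    (fun p => θ p.1 p.2 - x₀ - p.2 • g x₀) =O[shortTime] fun p => p.1 ^ 2 := by
  have hlim := hθ.tendsto hg.continuousAt hf
  have hgθ : (fun p => g (θ p.1 p.2) - g x₀) =O[shortTime] Prod.fst :=
    (hg.isBigO_sub.comp_tendsto hlim).trans (hθ.isBigO_sub hg.continuousAt hf)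
  have hfθ : (fun p => p.1 • f (θ p.1 p.2)) =O[shortTime] Prod.fst := by
    simpa using (isBigO_refl Prod.fst shortTime).smul ((hf.tendsto.comp hlim).isBigO_one ℝ)
  have hvel : (fun p => g (θ p.1 p.2) + p.1 • f (θ p.1 p.2) - g x₀) =O[shortTime]
      fun p => p.1 ^ 1 := by
    simpa only [pow_one, sub_add_eq_add_sub] using hgθ.add hfθ
  have hderiv : ∀ᶠ h in 𝓝[>] 0, ∀ t ∈ Icc 0 h, HasDerivWithinAt (fun s => θ h s - s • g x₀)
      (g (θ h t) + h • f (θ h t) - g x₀) (Icc 0 h) t := by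
    filter_upwards [hθ.hasDerivWithinAt] with h hh t ht
    simpa only [one_smul] using! (hh t ht).sub ((hasDerivWithinAt_id t _).smul_const (g x₀))
  refine (isBigO_sub_initial_of_deriv hderiv hvel).congr' ?_ .rfl
  filter_upwards [tendsto_fst_shortTime.eventually hθ.initial] with p hinit
  rw [hinit]
  module

lemma isBigO_velocity_sub_linear (hθ : IsPerturbedFlow g f x₀ θ) (hg : ContDiffAt ℝ 2 g x₀)
    (hf : DifferentiableAt ℝ f x₀) :
    (fun p => g (θ p.1 p.2) + p.1 • f (θ p.1 p.2)
      - (g x₀ + p.1 • f x₀ + p.2 • fderiv ℝ g x₀ (g x₀))) =O[shortTime] fun p => p.1 ^ 2 := by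
  have hg' : DifferentiableAt ℝ g x₀ := hg.differentiableAt two_ne_zero
  have hlim := hθ.tendsto hg'.continuousAt hf.continuousAt
  have hsub := hθ.isBigO_sub hg'.continuousAt hf.continuousAt
  have htaylor : (fun p => g (θ p.1 p.2) - g x₀ - fderiv ℝ g x₀ (θ p.1 p.2 - x₀)) =O[shortTime]
      fun p => p.1 ^ 2 :=
    ((isBigO_sub_sub_fderiv_of_contDiffAt hg).comp_tendsto hlim).trans (hsub.norm_left.pow 2)
  have hlinear : (fun p => fderiv ℝ g x₀ (θ p.1 p.2 - x₀ - p.2 • g x₀)) =O[shortTime]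
      fun p => p.1 ^ 2 :=
    ((fderiv ℝ g x₀).isBigO_comp _ _).trans (hθ.isBigO_sub_linear hg' hf.continuousAt)
  have hperturb : (fun p => p.1 • (f (θ p.1 p.2) - f x₀)) =O[shortTime] fun p => p.1 ^ 2 := by
    simpa only [sq] using!
      (isBigO_refl Prod.fst shortTime).smul ((hf.isBigO_sub.comp_tendsto hlim).trans hsub)
  refine ((htaylor.add hlinear).add hperturb).congr_left fun p => ?_
  rw [map_sub _ (θ p.1 p.2 - x₀), map_smul]
  module

lemma isBigO_sub_quadratic (hθ : IsPerturbedFlow g f x₀ θ) (hg : ContDiffAt ℝ 2 g x₀)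
    (hf : DifferentiableAt ℝ f x₀) :
    (fun p => θ p.1 p.2 - (x₀ + p.2 • (g x₀ + p.1 • f x₀)
      + p.2 ^ 2 • (1 / 2 : ℝ) • fderiv ℝ g x₀ (g x₀))) =O[shortTime] fun p => p.1 ^ 3 := by
  have hderiv : ∀ᶠ h in 𝓝[>] 0, ∀ t ∈ Icc 0 h,
      HasDerivWithinAt (fun s => θ h s - (s • (g x₀ + h • f x₀)
          + s ^ 2 • (1 / 2 : ℝ) • fderiv ℝ g x₀ (g x₀)))
        (g (θ h t) + h • f (θ h t) - (g x₀ + h • f x₀ + t • fderiv ℝ g x₀ (g x₀)))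
        (Icc 0 h) t := by
    filter_upwards [hθ.hasDerivWithinAt] with h hh t ht
    convert! (hh t ht).sub (((hasDerivWithinAt_id t _).smul_const (g x₀ + h • f x₀)).add
      (((hasDerivAt_pow 2 t).hasDerivWithinAt).smul_const
        ((1 / 2 : ℝ) • fderiv ℝ g x₀ (g x₀)))) using 1
    module
  refine (isBigO_sub_initial_of_deriv hderiv (hθ.isBigO_velocity_sub_linear hg hf)).congr' ?_ .rfl
  filter_upwards [tendsto_fst_shortTime.eventually hθ.initial] with p hinit
  rw [hinit]
  module

end IsPerturbedFlow

end NormedSpace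

section InnerProductSpace

variable {E : Type*} [NormedAddCommGroup E] [InnerProductSpace ℝ E] [CompleteSpace E]
  {L : E → ℝ} {x : E}

lemma contDiffAt_gradient {m n : WithTop ℕ∞} (hL : ContDiffAt ℝ n L x) (hmn : m + 1 ≤ n) :
    ContDiffAt ℝ m (∇ L) x :=
  (InnerProductSpace.toDual ℝ E).symm.contDiff.contDiffAt.comp x (hL.fderiv_right hmn)

lemma inner_fderiv_gradient (hL : DifferentiableAt ℝ (fderiv ℝ L) x) (v w : E) :
    inner ℝ (fderiv ℝ (∇ L) x v) w = fderiv ℝ (fderiv ℝ L) x v w := by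
  have h := (InnerProductSpace.toDual ℝ E).symm.toContinuousLinearEquiv.hasFDerivAt.comp x
    hL.hasFDerivAt
  rw [show fderiv ℝ (∇ L) x = _ from h.fderiv]
  exact InnerProductSpace.toDual_symm_apply

lemma gradient_norm_gradient_sq (hL : ContDiffAt ℝ 2 L x) :
    ∇ (fun y => ‖∇ L y‖ ^ 2) x = (2 : ℝ) • fderiv ℝ (∇ L) x (∇ L x) := by
  have hfderiv : DifferentiableAt ℝ (fderiv ℝ L) x :=
    (hL.fderiv_right (m := 1) (by norm_num)).differentiableAt one_ne_zero
  have hgrad : DifferentiableAt ℝ (∇ L) x :=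
    (contDiffAt_gradient (m := 1) hL (by norm_num)).differentiableAt one_ne_zero
  have hsymm : IsSymmSndFDerivAt ℝ L x := hL.isSymmSndFDerivAt (by simp)
  refine ext_inner_right ℝ fun w => ?_
  calc inner ℝ (∇ (fun y => ‖∇ L y‖ ^ 2) x) w
      = 2 * inner ℝ (∇ L x) (fderiv ℝ (∇ L) x w) := by
        rw [inner_gradient_left, hgrad.hasFDerivAt.norm_sq.fderiv]
        simp
    _ = 2 * fderiv ℝ (fderiv ℝ L) x w (∇ L x) := by
        rw [real_inner_comm, inner_fderiv_gradient hfderiv]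
    _ = 2 * inner ℝ (fderiv ℝ (∇ L) x (∇ L x)) w := by
        rw [hsymm.eq, inner_fderiv_gradient hfderiv]
    _ = inner ℝ ((2 : ℝ) • fderiv ℝ (∇ L) x (∇ L x)) w := by
        rw [real_inner_smul_left]

end InnerProductSpace

lemma exists_forall_Ioo_norm_le_of_isBigO {E : Type*} [Norm E] {u : ℝ → E} {k : ℕ}
    (hu : u =O[𝓝[>] 0] fun h => h ^ k) :
    ∃ C > (0 : ℝ), ∃ h₀ > (0 : ℝ), ∀ h ∈ Ioo (0 : ℝ) h₀, ‖u h‖ ≤ C * h ^ k := by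
  obtain ⟨C, hC, hbound⟩ := hu.exists_pos
  obtain ⟨h₀, hh₀, hle⟩ := mem_nhdsGT_iff_exists_Ioo_subset.1 hbound.bound
  refine ⟨C, hC, h₀, hh₀, fun h hh => ?_⟩
  calc ‖u h‖
      ≤ C * ‖h ^ k‖ := hle hh
    _ = C * h ^ k := by rw [Real.norm_of_nonneg (pow_nonneg hh.1.le k)]

theorem modified_equation_solution_expansion_general {E : Type*} [NormedAddCommGroup E]
    [InnerProductSpace ℝ E] [CompleteSpace E] {L : E → ℝ} {f₁ : E → E} {θ₀ : E} {θt : ℝ → ℝ → E}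
    (hL : ContDiffAt ℝ 3 L θ₀) (hf₁ : DifferentiableAt ℝ f₁ θ₀)
    (hθt : IsPerturbedFlow (-∇ L) f₁ θ₀ θt) :
    (fun h => θt h h - (θ₀ - h • ∇ L θ₀
        + h ^ 2 • (f₁ θ₀ + (1 / 4 : ℝ) • ∇ (fun θ => ‖∇ L θ‖ ^ 2) θ₀)))
      =O[𝓝[>] 0] fun h => h ^ 3 := by
  have hgrad : ContDiffAt ℝ 2 (-∇ L) θ₀ := (contDiffAt_gradient hL (by norm_num)).neg
  refine ((hθt.isBigO_sub_quadratic hgrad hf₁).comp_tendsto tendsto_diag_shortTime).congr_left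
    fun h => ?_
  have hquad : fderiv ℝ (-∇ L) θ₀ ((-∇ L) θ₀)
      = (1 / 2 : ℝ) • ∇ (fun θ => ‖∇ L θ‖ ^ 2) θ₀ := by
    rw [gradient_norm_gradient_sq (hL.of_le (by norm_num)), fderiv_neg]
    simp
  rw [Function.comp_apply, hquad, Pi.neg_apply]
  module

/-- **Second-order Taylor expansion of the modified-equation solution.**
If `L : ℝⁿ → ℝ` is C³ with bounded derivatives, `f₁` is a C¹ vector field with bounded
derivative, and for each `h > 0` the curve `θt h` solves `θ̇ = -∇L(θ) + h f₁(θ)` with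
`θt h 0 = θ₀`, then
`θt h h = θ₀ - h ∇L(θ₀) + h² (f₁(θ₀) + (1/4) ∇(‖∇L‖²)(θ₀)) + O(h³)`. -/
theorem modified_equation_solution_expansion {n : ℕ}
    (L : EuclideanSpace ℝ (Fin n) → ℝ)
    (hL : ContDiff ℝ 3 L)
    (K : ℝ)
    (hbound : ∀ i : ℕ, 1 ≤ i → i ≤ 3 → ∀ x, ‖iteratedFDeriv ℝ i L x‖ ≤ K)
    (f₁ : EuclideanSpace ℝ (Fin n) → EuclideanSpace ℝ (Fin n))
    (hf₁ : ContDiff ℝ 1 f₁)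
    (Kf : ℝ)
    (hbf : ∀ x, ‖fderiv ℝ f₁ x‖ ≤ Kf)
    (θ₀ : EuclideanSpace ℝ (Fin n))
    (θt : ℝ → ℝ → EuclideanSpace ℝ (Fin n))
    (hinit : ∀ h : ℝ, 0 < h → θt h 0 = θ₀)
    (hode : ∀ h : ℝ, 0 < h → ∀ t ∈ Icc (0 : ℝ) h,
      HasDerivAt (θt h) (-(gradient L (θt h t)) + h • f₁ (θt h t)) t) :
    ∃ C > (0 : ℝ), ∃ h₀ > (0 : ℝ), ∀ h ∈ Ioo (0 : ℝ) h₀,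
      ‖θt h h -
          (θ₀ - h • gradient L θ₀
            + h ^ 2 • (f₁ θ₀
              + (1 / 4 : ℝ) • gradient (fun θ => ‖gradient L θ‖ ^ 2) θ₀))‖
        ≤ C * h ^ 3 :=
  exists_forall_Ioo_norm_le_of_isBigO <| modified_equation_solution_expansion_general
    hL.contDiffAt (hf₁.differentiable one_ne_zero θ₀)
    { initial := eventually_mem_nhdsWithin.mono hinit
      hasDerivWithinAt := eventually_mem_nhdsWithin.mono fun h hh t ht =>
        (hode h hh t ht).hasDerivWithinAt }
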